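/- Fix nonnegative reals m₀₀, m₁₁, m₂₂, m₃₃ summing to 1 and e_x, e_y ∈ [0,1]; set e_z = m₁₁ + m₂₂ and p₀ = (2−e_x−e_y−e_z)/2, p₁ = (e_x+e_y−e_z)/2, p₂ = (e_y+e_z−e_x)/2, p₃ = (e_z+e_x−e_y)/2, assumed nonnegative. Let τ be the 4×4 matrix with diagonal (m₀₀, m₁₁, m₂₂, m₃₃), entry (1−e_x−e_y)/2 at positions (|00⟩,|11⟩) and (|11⟩,|00⟩), entry (e_y−e_x)/2 at positions (|01⟩,|10⟩) and (|10⟩,|01⟩), and zeros elsewhere, and assume τ is positive semidefinite. Then C(τ) − H(e_z) ≥ 1 − H({pᵢ}), where H({pᵢ}) = −∑_{i=0}^{3} pᵢ log₂ pᵢ; i.e., the improved six-state key rate is never smaller than the standard six-state rate. -/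

import Mathlib

/-!
The matrix `τ` splits into the parity blocks `{|00⟩, |11⟩}` and `{|01⟩, |10⟩}`, each of the form
`[[m, a], [a, m']]`. With `s = m + m'`, its eigenvalues are `(s ± r) / 2`, where
`r² = (m - m')² + (2a)²`. Since `p₀, p₁` and `p₂, p₃` are the numbers `s / 2 ± a` of the two blocks,
and since `1 + H(e_z)` is the entropy of the diagonal with `m` and `m'` both replaced by `s / 2`,
the claim is the sum over the two blocks of the inequality `block_entropy`.

After scaling by `s`, that inequality reads `Φ x + Φ y ≤ Φ z` for `z² = x² + y² ≤ 1`, where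
`Φ x = (1 + x) log (1 + x) + (1 - x) log (1 - x)`. It holds because `Φ` has an even power series
`∑ x ^ (2k + 2) / ((k + 1) (2k + 1))` with nonnegative coefficients and
`u ^ n + v ^ n ≤ (u + v) ^ n` for `u, v ≥ 0` (`devEnt_add_le`).
-/

open Matrix Complex Kronecker
open scoped ComplexOrder

noncomputable section

/-- von Neumann entropy (base 2), via eigenvalues; junk value 0 if not Hermitian. -/
noncomputable def vnEntropy {n : Type*} [Fintype n] [DecidableEq n] (ρ : Matrix n n ℂ) : ℝ :=
  if h : ρ.IsHermitian then -∑ i, h.eigenvalues i * Real.logb 2 (h.eigenvalues i) else 0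

/-- The diagonal part of a matrix. -/
def diagPart {n : Type*} [Fintype n] [DecidableEq n] (ρ : Matrix n n ℂ) : Matrix n n ℂ :=
  Matrix.diagonal fun i => ρ i i

/-- Relative entropy of coherence in the computational basis. -/
noncomputable def relEntCoh {n : Type*} [Fintype n] [DecidableEq n] (ρ : Matrix n n ℂ) : ℝ :=
  vnEntropy (diagPart ρ) - vnEntropy ρ

/-- A density matrix: positive semidefinite with trace one. -/
def IsDensity {n : Type*} [Fintype n] [DecidableEq n] (ρ : Matrix n n ℂ) : Prop :=
  ρ.PosSemidef ∧ ρ.trace = 1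

/-- Two-qubit index type: the first component is qubit A, the second is qubit B. -/
abbrev Q2 := Fin 2 × Fin 2

/-- Z-parity projector Π⁺ = |00⟩⟨00| + |11⟩⟨11|. -/
def PiPlus : Matrix Q2 Q2 ℂ := Matrix.diagonal fun i => if i.1 = i.2 then 1 else 0

/-- Z-parity projector Π⁻ = |01⟩⟨01| + |10⟩⟨10|. -/
def PiMinus : Matrix Q2 Q2 ℂ := Matrix.diagonal fun i => if i.1 = i.2 then 0 else 1

/-- Partial dephasing channel Φ(ρ) = Π⁺ρΠ⁺ + Π⁻ρΠ⁻. -/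
def dephase (ρ : Matrix Q2 Q2 ℂ) : Matrix Q2 Q2 ℂ :=
  PiPlus * ρ * PiPlus + PiMinus * ρ * PiMinus

/-- Binary entropy (base 2). -/
noncomputable def binEnt (e : ℝ) : ℝ := -(e * Real.logb 2 e) - (1 - e) * Real.logb 2 (1 - e)

/-- X-basis projector Π_x⁻ = |+−⟩⟨+−| + |−+⟩⟨−+|, written entrywise. -/
def PiXMinus : Matrix Q2 Q2 ℂ :=
  Matrix.of fun i j => (1/4 : ℂ) *
    ((if i.1 = j.1 then 1 else -1) + (if i.2 = j.2 then 1 else -1))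

/-- phase i^a for a : Fin 2 -/
def yph : Fin 2 → ℂ := fun a => if a = 0 then 1 else Complex.I

/-- Y-basis projector Π_y⁻ = |+i,+i⟩⟨+i,+i| + |−i,−i⟩⟨−i,−i|, written entrywise. -/
def PiYMinus : Matrix Q2 Q2 ℂ :=
  Matrix.of fun i j => (1/4 : ℂ) *
    (yph i.1 * yph i.2 * star (yph j.1) * star (yph j.2)
      + star (yph i.1) * star (yph i.2) * yph j.1 * yph j.2)

/-- The matrix ρ(a,b): diagonal (m00,m11,m22,m33), entry a between |00⟩,|11⟩,
entry b between |01⟩,|10⟩, zeros elsewhere. -/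
def rhoGen (m00 m11 m22 m33 a b : ℝ) : Matrix Q2 Q2 ℂ :=
  Matrix.of fun i j =>
    if i = j then
      (if i = (0, 0) then (m00 : ℂ) else if i = (0, 1) then (m11 : ℂ)
        else if i = (1, 0) then (m22 : ℂ) else (m33 : ℂ))
    else if (i = ((0 : Fin 2), (0 : Fin 2)) ∧ j = (1, 1)) ∨ (i = (1, 1) ∧ j = (0, 0)) then (a : ℂ)
    else if (i = ((0 : Fin 2), (1 : Fin 2)) ∧ j = (1, 0)) ∨ (i = (1, 0) ∧ j = (0, 1)) then (b : ℂ)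
    else 0

/-- The Bell-diagonal state with weights p0,p1,p2,p3 on |Φ⁺⟩,|Φ⁻⟩,|Ψ⁺⟩,|Ψ⁻⟩. -/
def bellDiag (p0 p1 p2 p3 : ℝ) : Matrix Q2 Q2 ℂ :=
  rhoGen ((p0 + p1)/2) ((p2 + p3)/2) ((p2 + p3)/2) ((p0 + p1)/2) ((p0 - p1)/2) ((p2 - p3)/2)

/-- Partial trace over the first qubit (A). -/
def trA (M : Matrix Q2 Q2 ℂ) : Matrix (Fin 2) (Fin 2) ℂ :=
  Matrix.of fun j j' => ∑ i : Fin 2, M (i, j) (i, j')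

/-- Partial trace over the second qubit (B). -/
def trB (M : Matrix Q2 Q2 ℂ) : Matrix (Fin 2) (Fin 2) ℂ :=
  Matrix.of fun i i' => ∑ j : Fin 2, M (i, j) (i', j)

/-- Coherence-based key-rate functional K(ρ) = C(Φ(ρ)) − H(Tr(Π⁻ρ)). -/
noncomputable def keyRate (ρ : Matrix Q2 Q2 ℂ) : ℝ :=
  relEntCoh (dephase ρ) - binEnt ((PiMinus * ρ).trace.re)

/-- Outer product |ψ⟩⟨ψ|. -/
def outer (ψ : Q2 → ℂ) : Matrix Q2 Q2 ℂ := Matrix.of fun i j => ψ i * star (ψ j)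

/-- Basis-optimized key rate: supremum of K over all local basis changes. -/
noncomputable def Km (ρ : Matrix Q2 Q2 ℂ) : ℝ :=
  sSup {x : ℝ | ∃ U V : Matrix (Fin 2) (Fin 2) ℂ, U ∈ Matrix.unitaryGroup (Fin 2) ℂ ∧
    V ∈ Matrix.unitaryGroup (Fin 2) ℂ ∧ x = keyRate ((U ⊗ₖ V) * ρ * (U ⊗ₖ V)ᴴ)}

/-! ### The scalar inequality -/

/-- `(1 + x) log (1 + x) + (1 - x) log (1 - x)`: twice the entropy deficit, in nats, of the
distribution `((1 + x) / 2, (1 - x) / 2)` compared with the uniform one. -/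
def devEnt (x : ℝ) : ℝ := -(Real.negMulLog (1 + x) + Real.negMulLog (1 - x))

lemma continuous_devEnt : Continuous devEnt := by
  unfold devEnt
  exact ((Real.continuous_negMulLog.comp (by fun_prop)).add
    (Real.continuous_negMulLog.comp (by fun_prop))).neg

/-- Obtained from the series of `log (1 - x²)` and of `log (1 + x) - log (1 - x)`, because
`devEnt x = log (1 - x²) + x (log (1 + x) - log (1 - x))`. -/
lemma hasSum_devEnt {x : ℝ} (hx : |x| < 1) :
    HasSum (fun k : ℕ => (x ^ 2) ^ (k + 1) / ((k + 1) * (2 * k + 1))) (devEnt x) := by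
  have hx2 : |x ^ 2| < 1 := by
    rw [abs_of_nonneg (sq_nonneg x)]
    exact (sq_lt_one_iff_abs_lt_one x).2 hx
  have hA := (Real.hasSum_pow_div_log_of_abs_lt_one hx2).neg
  have hB := (Real.hasSum_log_sub_log_of_abs_lt_one hx).mul_left x
  have hlt := abs_lt.1 hx
  have hval : devEnt x =
      - -Real.log (1 - x ^ 2) + x * (Real.log (1 + x) - Real.log (1 - x)) := by
    have h : Real.log (1 - x ^ 2) = Real.log (1 + x) + Real.log (1 - x) := by
      rw [← Real.log_mul (by linarith) (by linarith)]
      ring_nf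
    rw [h, devEnt, Real.negMulLog, Real.negMulLog]
    ring
  rw [hval]
  refine (congrArg (HasSum · _) (funext fun k => ?_)).mpr (hA.add hB)
  have h1 : (k : ℝ) + 1 ≠ 0 := by positivity
  have h2 : 2 * (k : ℝ) + 1 ≠ 0 := by positivity
  field_simp
  ring

lemma devEnt_add_le_of_lt {x y z : ℝ} (hz : |z| < 1) (h : z ^ 2 = x ^ 2 + y ^ 2) :
    devEnt x + devEnt y ≤ devEnt z := by
  have hz2 := (sq_lt_one_iff_abs_lt_one z).2 hz
  have hx : |x| < 1 := (sq_lt_one_iff_abs_lt_one x).1 (by nlinarith [sq_nonneg y])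
  have hy : |y| < 1 := (sq_lt_one_iff_abs_lt_one y).1 (by nlinarith [sq_nonneg x])
  refine hasSum_le (fun k => ?_) ((hasSum_devEnt hx).add (hasSum_devEnt hy)) (hasSum_devEnt hz)
  rw [← add_div, h]
  gcongr
  exact pow_add_pow_le (sq_nonneg x) (sq_nonneg y) (Nat.succ_ne_zero k)

/-- The inequality on the closed disc: the point `(x, y, z)` is scaled into the open disc, where
the series converges, and the scaling factor tends to `1`. -/
lemma devEnt_add_le {x y z : ℝ} (hz : z ^ 2 ≤ 1) (h : z ^ 2 = x ^ 2 + y ^ 2) :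
    devEnt x + devEnt y ≤ devEnt z := by
  have hlim : ∀ w : ℝ, Filter.Tendsto (fun t : ℝ => devEnt (t * w)) (nhdsWithin 1 (Set.Iio 1))
      (nhds (devEnt w)) := fun w => by
    have hc : Continuous fun t : ℝ => devEnt (t * w) := continuous_devEnt.comp (by fun_prop)
    simpa using (hc.tendsto 1).mono_left nhdsWithin_le_nhds
  refine le_of_tendsto_of_tendsto ((hlim x).add (hlim y)) (hlim z) ?_
  filter_upwards [Ioo_mem_nhdsLT (zero_lt_one' ℝ)] with t ht
  refine devEnt_add_le_of_lt ?_ (by rw [mul_pow, h]; ring)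
  rw [abs_mul, abs_of_pos ht.1]
  have := abs_nonneg z
  have hz1 : |z| ≤ 1 := (sq_le_one_iff_abs_le_one z).1 hz
  nlinarith [ht.1, ht.2]

/-- Each side consists of entropies of pairs of total weight `s`, so the scaling rule of
`negMulLog` contributes the same terms to both sides. -/
lemma scaled_entropy {s x y z : ℝ} (hs : 0 ≤ s) (hz : z ^ 2 ≤ 1) (h : z ^ 2 = x ^ 2 + y ^ 2) :
    2 * Real.negMulLog (s / 2) + Real.negMulLog (s / 2 * (1 + z)) +
        Real.negMulLog (s / 2 * (1 - z)) ≤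
      Real.negMulLog (s / 2 * (1 + x)) + Real.negMulLog (s / 2 * (1 - x)) +
        Real.negMulLog (s / 2 * (1 + y)) + Real.negMulLog (s / 2 * (1 - y)) := by
  have hd := mul_le_mul_of_nonneg_left (devEnt_add_le hz h) (by linarith : (0 : ℝ) ≤ s / 2)
  simp only [devEnt] at hd
  simp only [Real.negMulLog_mul]
  linarith

/-- For the block `[[m, a], [a, m']]`: replacing both diagonal entries by their mean does not
increase the relative entropy of coherence `S(diagonal) - S(spectrum)`, here in nats. -/
lemma block_entropy {m m' a r : ℝ} (hm : 0 ≤ m) (hm' : 0 ≤ m') (ha : a ^ 2 ≤ m * m')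
    (hr : r ^ 2 = (m - m') ^ 2 + 4 * a ^ 2) :
    2 * Real.negMulLog ((m + m') / 2) + Real.negMulLog ((m + m' + r) / 2) +
        Real.negMulLog ((m + m' - r) / 2) ≤
      Real.negMulLog ((m + m') / 2 + a) + Real.negMulLog ((m + m') / 2 - a) +
        Real.negMulLog m + Real.negMulLog m' := by
  rcases (add_nonneg hm hm').eq_or_lt with hs | hs
  · obtain rfl : m = 0 := by linarith
    obtain rfl : m' = 0 := by linarith
    obtain rfl : a = 0 := by nlinarith
    obtain rfl : r = 0 := by nlinarith
    simp
  · have hs0 := hs.ne'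
    have key := scaled_entropy (s := m + m') (x := 2 * a / (m + m')) (y := (m - m') / (m + m'))
      (z := r / (m + m')) hs.le
      (by rw [div_pow, div_le_one (by positivity)]; nlinarith)
      (by rw [div_pow, div_pow, div_pow, hr]; ring)
    have e1 : (m + m') / 2 * (1 + r / (m + m')) = (m + m' + r) / 2 := by field_simp
    have e2 : (m + m') / 2 * (1 - r / (m + m')) = (m + m' - r) / 2 := by field_simp
    have e3 : (m + m') / 2 * (1 + 2 * a / (m + m')) = (m + m') / 2 + a := by field_simp
    have e4 : (m + m') / 2 * (1 - 2 * a / (m + m')) = (m + m') / 2 - a := by field_simp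
    have e5 : (m + m') / 2 * (1 + (m - m') / (m + m')) = m := by field_simp; ring
    have e6 : (m + m') / 2 * (1 - (m - m') / (m + m')) = m' := by field_simp; ring
    rwa [e1, e2, e3, e4, e5, e6] at key

/-! ### The spectrum of `rhoGen` -/

/-- The splitting of the two-qubit basis into `{|00⟩, |11⟩}` and `{|01⟩, |10⟩}`. -/
def parityEquiv : Fin 2 ⊕ Fin 2 ≃ Q2 where
  toFun := Sum.elim (fun i => (i, i)) (fun i => (i, 1 - i))
  invFun q := if q.1 = q.2 then Sum.inl q.1 else Sum.inr q.1
  left_inv := by decide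
  right_inv := by decide

lemma rhoGen_submatrix (m00 m11 m22 m33 a b : ℝ) :
    (rhoGen m00 m11 m22 m33 a b).submatrix parityEquiv parityEquiv =
      fromBlocks !![(m00 : ℂ), a; a, m33] 0 0 !![(m11 : ℂ), b; b, m22] := by
  ext i j
  rcases i with i | i <;> rcases j with j | j <;> fin_cases i <;> fin_cases j <;>
    simp [rhoGen, parityEquiv]

lemma rhoGen_charpoly {m00 m11 m22 m33 a b l0 l1 l2 l3 : ℝ}
    (hs : l0 + l1 = m00 + m33) (hd : l0 * l1 = m00 * m33 - a ^ 2)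
    (hs' : l2 + l3 = m11 + m22) (hd' : l2 * l3 = m11 * m22 - b ^ 2) :
    (rhoGen m00 m11 m22 m33 a b).charpoly =
      (({l0, l1, l2, l3} : Multiset ℝ).map
        fun l : ℝ => Polynomial.X - Polynomial.C (l : ℂ)).prod := by
  have h := Matrix.charpoly_reindex parityEquiv.symm (rhoGen m00 m11 m22 m33 a b)
  rw [Matrix.reindex_apply, Equiv.symm_symm, rhoGen_submatrix,
    Matrix.charpoly_fromBlocks_zero₁₂, Matrix.charpoly_fin_two, Matrix.charpoly_fin_two] at h
  rw [← h]
  have t : (m00 : ℂ) + m33 = l0 + l1 := by exact_mod_cast hs.symm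
  have d : (m00 : ℂ) * m33 - a * a = l0 * l1 := by rw [← sq]; exact_mod_cast hd.symm
  have t' : (m11 : ℂ) + m22 = l2 + l3 := by exact_mod_cast hs'.symm
  have d' : (m11 : ℂ) * m22 - b * b = l2 * l3 := by rw [← sq]; exact_mod_cast hd'.symm
  simp only [Matrix.trace_fin_two_of, Matrix.det_fin_two_of, t, d, t', d', map_add, map_mul,
    Multiset.insert_eq_cons, Multiset.map_cons, Multiset.map_singleton, Multiset.prod_cons,
    Multiset.prod_singleton]
  ring

lemma vnEntropy_of_charpoly {n : Type*} [Fintype n] [DecidableEq n] {ρ : Matrix n n ℂ}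
    (hρ : ρ.IsHermitian) (L : Multiset ℝ)
    (hL : ρ.charpoly = (L.map fun l : ℝ => Polynomial.X - Polynomial.C (l : ℂ)).prod) :
    vnEntropy ρ = (L.map Real.negMulLog).sum / Real.log 2 := by
  have h := hρ.roots_charpoly_eq_eigenvalues
  have hroots : ρ.charpoly.roots = L.map fun l : ℝ => (l : ℂ) := by
    rw [hL, ← Polynomial.roots_multiset_prod_X_sub_C (L.map fun l : ℝ => (l : ℂ)),
      Multiset.map_map]
    rfl
  have hev : Finset.univ.val.map hρ.eigenvalues = L := by
    apply Multiset.map_injective Complex.ofReal_injective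
    rw [Multiset.map_map, ← hroots, h]
    rfl
  rw [vnEntropy, dif_pos hρ, ← hev, Multiset.map_map, div_eq_inv_mul, ← Finset.sum_neg_distrib]
  change _ = _ * ∑ i, Real.negMulLog (hρ.eigenvalues i)
  rw [Finset.mul_sum]
  refine Finset.sum_congr rfl fun i _ => ?_
  rw [Real.negMulLog, Real.logb]
  ring

lemma rhoGen_isHermitian (m00 m11 m22 m33 a b : ℝ) :
    (rhoGen m00 m11 m22 m33 a b).IsHermitian := by
  ext ⟨i, i'⟩ ⟨j, j'⟩
  fin_cases i <;> fin_cases i' <;> fin_cases j <;> fin_cases j' <;> simp [rhoGen]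

lemma vnEntropy_rhoGen {m00 m11 m22 m33 a b l0 l1 l2 l3 : ℝ}
    (hs : l0 + l1 = m00 + m33) (hd : l0 * l1 = m00 * m33 - a ^ 2)
    (hs' : l2 + l3 = m11 + m22) (hd' : l2 * l3 = m11 * m22 - b ^ 2) :
    vnEntropy (rhoGen m00 m11 m22 m33 a b) =
      (Real.negMulLog l0 + Real.negMulLog l1 + Real.negMulLog l2 + Real.negMulLog l3) /
        Real.log 2 := by
  rw [vnEntropy_of_charpoly (rhoGen_isHermitian ..) _ (rhoGen_charpoly hs hd hs' hd')]
  simp [add_assoc]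

lemma diagPart_rhoGen (m00 m11 m22 m33 a b : ℝ) :
    diagPart (rhoGen m00 m11 m22 m33 a b) = rhoGen m00 m11 m22 m33 0 0 := by
  ext ⟨i, i'⟩ ⟨j, j'⟩
  fin_cases i <;> fin_cases i' <;> fin_cases j <;> fin_cases j' <;> simp [rhoGen, diagPart]

lemma sq_le_of_posSemidef {m m' a : ℝ} (h : (!![(m : ℂ), a; a, m']).PosSemidef) :
    a ^ 2 ≤ m * m' := by
  have := h.det_nonneg
  rw [Matrix.det_fin_two_of] at this
  have h' : (0 : ℝ) ≤ m * m' - a * a := by exact_mod_cast this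
  linarith [sq a]

lemma two_mul_negMulLog_half {s : ℝ} :
    2 * Real.negMulLog (s / 2) = Real.negMulLog s + s * Real.log 2 := by
  rw [div_eq_mul_inv, Real.negMulLog_mul, Real.negMulLog, Real.negMulLog, Real.log_inv]
  ring

/-- the improved six-state key rate is never smaller than the
standard six-state rate. -/
theorem stmt_9 (m00 m11 m22 m33 ex ey : ℝ)
    (h00 : 0 ≤ m00) (h11 : 0 ≤ m11) (h22 : 0 ≤ m22) (h33 : 0 ≤ m33)
    (hsum : m00 + m11 + m22 + m33 = 1)
    (hex0 : 0 ≤ ex) (hex1 : ex ≤ 1) (hey0 : 0 ≤ ey) (hey1 : ey ≤ 1)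
    (ez : ℝ) (hez : ez = m11 + m22)
    (p0 p1 p2 p3 : ℝ) (hp0 : p0 = (2 - ex - ey - ez)/2) (hp1 : p1 = (ex + ey - ez)/2)
    (hp2 : p2 = (ey + ez - ex)/2) (hp3 : p3 = (ez + ex - ey)/2)
    (h0 : 0 ≤ p0) (h1 : 0 ≤ p1) (h2 : 0 ≤ p2) (h3 : 0 ≤ p3)
    (hτ : (rhoGen m00 m11 m22 m33 ((1 - ex - ey)/2) ((ey - ex)/2)).PosSemidef) :
    1 - (-(p0 * Real.logb 2 p0) - p1 * Real.logb 2 p1 - p2 * Real.logb 2 p2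
        - p3 * Real.logb 2 p3) ≤
      relEntCoh (rhoGen m00 m11 m22 m33 ((1 - ex - ey)/2) ((ey - ex)/2)) - binEnt ez := by
  set a := (1 - ex - ey) / 2 with ha
  set b := (ey - ex) / 2 with hb
  have hblocks := hτ.submatrix parityEquiv
  rw [rhoGen_submatrix] at hblocks
  have ha2 : a ^ 2 ≤ m00 * m33 := sq_le_of_posSemidef (hblocks.submatrix Sum.inl)
  have hb2 : b ^ 2 ≤ m11 * m22 := sq_le_of_posSemidef (hblocks.submatrix Sum.inr)
  obtain ⟨r, hr⟩ : ∃ r : ℝ, r ^ 2 = (m00 - m33) ^ 2 + 4 * a ^ 2 :=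
    ⟨_, Real.sq_sqrt (by positivity)⟩
  obtain ⟨q, hq⟩ : ∃ q : ℝ, q ^ 2 = (m11 - m22) ^ 2 + 4 * b ^ 2 :=
    ⟨_, Real.sq_sqrt (by positivity)⟩
  have hA := block_entropy h00 h33 ha2 hr
  have hB := block_entropy h11 h22 hb2 hq
  have e0 : (m00 + m33) / 2 + a = p0 := by rw [hp0, hez, ha]; linarith
  have e1 : (m00 + m33) / 2 - a = p1 := by rw [hp1, hez, ha]; linarith
  have e2 : (m11 + m22) / 2 + b = p2 := by rw [hp2, hez, hb]; linarith
  have e3 : (m11 + m22) / 2 - b = p3 := by rw [hp3, hez, hb]; linarith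
  have ez' : m00 + m33 = 1 - ez := by linarith
  rw [relEntCoh, diagPart_rhoGen,
    vnEntropy_rhoGen (l0 := m00) (l1 := m33) (l2 := m11) (l3 := m22) rfl (by ring) rfl (by ring),
    vnEntropy_rhoGen (l0 := (m00 + m33 + r) / 2) (l1 := (m00 + m33 - r) / 2)
      (l2 := (m11 + m22 + q) / 2) (l3 := (m11 + m22 - q) / 2)
      (by ring) (by linarith) (by ring) (by linarith)]
  rw [two_mul_negMulLog_half, e0, e1] at hA
  rw [two_mul_negMulLog_half, e2, e3] at hB
  rw [← hez] at hB ⊢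
  rw [ez'] at hA ⊢
  have hlog : 0 < Real.log 2 := Real.log_pos one_lt_two
  have hent : ∀ x : ℝ, x * Real.logb 2 x = -Real.negMulLog x / Real.log 2 := fun x => by
    rw [Real.negMulLog, Real.logb]
    ring
  simp only [binEnt, hent]
  -- Multiplying by `log 2` turns the goal into the sum of the two block inequalities.
  rw [← mul_le_mul_iff_left₀ hlog]
  field_simp
  linarith

end
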